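/- arXiv:1710.05161 — 5 statements merged into one kernel-verified Lean document; each statement's English description precedes it below -/
import Mathlib

section
/- Let C be a coalgebra over a field K and let σ, τ : C × C → K be bilinear forms. Define linear maps δ_σ, δ_τ, μ : C⊗C → C by δ_σ(c⊗d) = c₁σ(c₂, d) − σ(c, d₁)d₂, δ_τ(c⊗d) = c₁τ(c₂, d) − τ(c, d₁)d₂, and μ(c⊗d) = c₁σ(c₂, d) − τ(c, d₁)d₂. Then (C, δ_σ, δ_τ, μ) is a covariant bialgebra if and only if, for all c, d, e ∈ C: c₁·(σ(c₂₁, e)σ(c₂₂, d) − σ(c₂, d₁)σ(d₂, e) + τ(d, e₁)σ(c₂, e₂)) = (τ(c₁, e₁)σ(c₂, d) − τ(c, d₁)τ(d₂, e₁) + τ(d, e₁₁)τ(c, e₁₂))·e₂. -/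
open TensorProduct

noncomputable section

variable {K : Type*} [Field K] {C : Type*} [AddCommGroup C] [Module K C]

/-- Coassociativity of a comultiplication (no counit assumed). -/
def Coassoc (Δ : C →ₗ[K] C ⊗[K] C) : Prop :=
  ∀ c : C, (TensorProduct.assoc K C C C) (TensorProduct.map Δ LinearMap.id (Δ c)) =
    TensorProduct.map LinearMap.id Δ (Δ c)

/-- Rota-Baxter cosystem conditions. -/
def IsRBCosystem (Δ : C →ₗ[K] C ⊗[K] C) (Q T : C →ₗ[K] C) : Prop :=
  (∀ c : C, TensorProduct.map Q Q (Δ c) =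
      TensorProduct.map Q LinearMap.id (Δ (Q c)) +
      TensorProduct.map LinearMap.id T (Δ (Q c))) ∧
  (∀ c : C, TensorProduct.map T T (Δ c) =
      TensorProduct.map Q LinearMap.id (Δ (T c)) +
      TensorProduct.map LinearMap.id T (Δ (T c)))

/-- Non-degeneracy of a coalgebra. -/
def Nondegenerate (Δ : C →ₗ[K] C ⊗[K] C) : Prop :=
  ∀ f : C →ₗ[K] C,
    ((∀ c : C, TensorProduct.map LinearMap.id f (Δ c) = 0) ∨
     (∀ c : C, TensorProduct.map f LinearMap.id (Δ c) = 0)) → f = 0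

/-- `pairApply f g (x ⊗ y) = f x * g y`. -/
def pairApply (f g : C →ₗ[K] K) : C ⊗[K] C →ₗ[K] K :=
  TensorProduct.lift ((LinearMap.mul K K).compl₁₂ f g)

/-- Coassociative Yang–Baxter pair. -/
def IsCYBP (Δ : C →ₗ[K] C ⊗[K] C) (σ τ : C →ₗ[K] C →ₗ[K] K) : Prop :=
  (∀ c d e : C, pairApply (σ.flip e) (σ.flip d) (Δ c)
      - pairApply (σ c) (σ.flip e) (Δ d) + pairApply (τ d) (σ c) (Δ e) = 0) ∧
  (∀ c d e : C, pairApply (τ.flip e) (σ.flip d) (Δ c)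
      - pairApply (τ c) (τ.flip e) (Δ d) + pairApply (τ d) (τ c) (Δ e) = 0)

/-- Swap of the first two tensor factors of `C ⊗ (C ⊗ C)`. -/
def swapFirstTwo : C ⊗[K] (C ⊗[K] C) →ₗ[K] C ⊗[K] (C ⊗[K] C) :=
  (TensorProduct.assoc K C C C).toLinearMap ∘ₗ
    LinearMap.rTensor C (TensorProduct.comm K C C).toLinearMap ∘ₗ
    (TensorProduct.assoc K C C C).symm.toLinearMap

/-- `contract13 σ (x ⊗ (y ⊗ z)) = σ x z • y`. -/
def contract13 (σ : C →ₗ[K] C →ₗ[K] K) : C ⊗[K] (C ⊗[K] C) →ₗ[K] C :=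
  (TensorProduct.rid K C).toLinearMap ∘ₗ
    LinearMap.lTensor C (TensorProduct.lift σ) ∘ₗ swapFirstTwo

/-- `muForm Δ σ τ (c ⊗ d) = σ(c₂,d) • c₁ − τ(c,d₁) • d₂`. -/
def muForm (Δ : C →ₗ[K] C ⊗[K] C) (σ τ : C →ₗ[K] C →ₗ[K] K) :
    C ⊗[K] C →ₗ[K] C :=
  ((TensorProduct.rid K C).toLinearMap ∘ₗ
      LinearMap.lTensor C (TensorProduct.lift σ) ∘ₗ
      (TensorProduct.assoc K C C C).toLinearMap ∘ₗ LinearMap.rTensor C Δ)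
  - ((TensorProduct.lid K C).toLinearMap ∘ₗ
      LinearMap.rTensor C (TensorProduct.lift τ) ∘ₗ
      (TensorProduct.assoc K C C C).symm.toLinearMap ∘ₗ LinearMap.lTensor C Δ)

/-- Coderivation condition for a multiplication-like map on a coalgebra. -/
def IsCoderivation (Δ : C →ₗ[K] C ⊗[K] C) (δ : C ⊗[K] C →ₗ[K] C) : Prop :=
  ∀ c d : C, Δ (δ (c ⊗ₜ d)) =
    LinearMap.lTensor C (δ ∘ₗ (TensorProduct.mk K C C).flip d) (Δ c) +
    LinearMap.rTensor C (δ ∘ₗ TensorProduct.mk K C C c) (Δ d)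

/-- Covariant coderivation with respect to `(δ₁, δ₂)`. -/
def IsCovariant (Δ : C →ₗ[K] C ⊗[K] C) (δ₁ δ₂ μ : C ⊗[K] C →ₗ[K] C) : Prop :=
  (∀ c d : C, Δ (μ (c ⊗ₜ d)) =
      LinearMap.rTensor C (μ ∘ₗ TensorProduct.mk K C C c) (Δ d) +
      LinearMap.lTensor C (δ₁ ∘ₗ (TensorProduct.mk K C C).flip d) (Δ c)) ∧
  (∀ c d : C, Δ (μ (c ⊗ₜ d)) =
      LinearMap.lTensor C (μ ∘ₗ (TensorProduct.mk K C C).flip d) (Δ c) +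
      LinearMap.rTensor C (δ₂ ∘ₗ TensorProduct.mk K C C c) (Δ d))

/-- Associativity of a multiplication `μ : C ⊗ C →ₗ C`. -/
def IsAssocMul (μ : C ⊗[K] C →ₗ[K] C) : Prop :=
  ∀ c d e : C, μ (μ (c ⊗ₜ d) ⊗ₜ e) = μ (c ⊗ₜ μ (d ⊗ₜ e))

/-- Counit condition. -/
def IsCounit (Δ : C →ₗ[K] C ⊗[K] C) (ε : C →ₗ[K] K) : Prop :=
  ∀ c : C, (TensorProduct.lid K C) (TensorProduct.map ε LinearMap.id (Δ c)) = c ∧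
    (TensorProduct.rid K C) (TensorProduct.map LinearMap.id ε (Δ c)) = c

/-- Dendriform coalgebra conditions for `(Δr, Δl) = (Δ_≻, Δ_≺)`. -/
def IsDendriformCoalgebra (Δr Δl : C →ₗ[K] C ⊗[K] C) : Prop :=
  (∀ c : C, (TensorProduct.assoc K C C C) (TensorProduct.map Δr LinearMap.id (Δr c)) =
      TensorProduct.map LinearMap.id Δr (Δr c) + TensorProduct.map LinearMap.id Δl (Δr c)) ∧
  (∀ c : C, (TensorProduct.assoc K C C C) (TensorProduct.map Δl LinearMap.id (Δr c)) =
      TensorProduct.map LinearMap.id Δr (Δl c)) ∧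
  (∀ c : C, (TensorProduct.assoc K C C C) (TensorProduct.map Δr LinearMap.id (Δl c)) +
      (TensorProduct.assoc K C C C) (TensorProduct.map Δl LinearMap.id (Δl c)) =
      TensorProduct.map LinearMap.id Δl (Δl c))

/-- The conditions on the bilinear form `u` in Theorem 4.11. -/
def UCond (Δ : C →ₗ[K] C ⊗[K] C) (δ₁ δ₂ : C ⊗[K] C →ₗ[K] C)
    (u : C →ₗ[K] C →ₗ[K] K) : Prop :=
  (∀ c d : C, δ₁ (c ⊗ₜ d) - δ₂ (c ⊗ₜ d) =
      (TensorProduct.rid K C) (LinearMap.lTensor C (u.flip d) (Δ c)) -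
      (TensorProduct.lid K C) (LinearMap.rTensor C (u c) (Δ d))) ∧
  (∀ c d e : C, δ₁ (δ₁ (c ⊗ₜ d) ⊗ₜ e) - δ₁ (c ⊗ₜ δ₁ (d ⊗ₜ e)) =
      (TensorProduct.lid K C)
        (TensorProduct.map (u d) (δ₁ ∘ₗ TensorProduct.mk K C C c) (Δ e))) ∧
  (∀ c d e : C, u (δ₁ (c ⊗ₜ d)) e - u c (δ₁ (d ⊗ₜ e)) =
      pairApply (u d) (u c) (Δ e) - pairApply (u c) (u.flip e) (Δ d))

/-!
Write `f ⇀ c = c₁ f(c₂)` and `c ↼ f = f(c₁) c₂` for the two actions of the dual space on `C`, so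
that `μ(c ⊗ d) = σ(-, d) ⇀ c − d ↼ τ(c, -)`. By coassociativity each action commutes with the
comultiplication on the tensor factor it does not touch, hence the two actions commute. Therefore
`Δ(μ(c ⊗ d)) = c₁ ⊗ (σ(-, d) ⇀ c₂) − (d₁ ↼ τ(c, -)) ⊗ d₂`. The right-hand side of a covariance
identity differs from this only by two copies of `c₁ ⊗ σ(c₂, d₁) d₂` (or of the same term for `τ`)
with opposite signs, so both identities always hold, and associativity of `μ` is the only
condition. In the associator of `c, d, e` the mixed terms `σ(-, e) ⇀ (d ↼ τ(c, -))` and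
`(σ(-, e) ⇀ d) ↼ τ(c, -)` cancel, and what remains is the difference of the two sides of
Eq. (4.20).
-/

section Contraction

variable {R M N P Q : Type*} [CommSemiring R] [AddCommMonoid M] [AddCommMonoid N]
  [AddCommMonoid P] [AddCommMonoid Q] [Module R M] [Module R N] [Module R P] [Module R Q]

/-- The contraction `m ⊗ n ↦ f(m) n` of the first tensor factor with a functional `f`, linear
in `f`. -/
def contractFst : (M →ₗ[R] R) →ₗ[R] M ⊗[R] N →ₗ[R] N :=
  (TensorProduct.lid R N).toLinearMap.compRight R ∘ₗ LinearMap.rTensorHom N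

/-- The contraction `m ⊗ n ↦ f(n) m` of the second tensor factor with a functional `f`, linear
in `f`. -/
def contractSnd : (N →ₗ[R] R) →ₗ[R] M ⊗[R] N →ₗ[R] M :=
  (TensorProduct.rid R M).toLinearMap.compRight R ∘ₗ LinearMap.lTensorHom M

@[simp]
theorem contractFst_tmul (f : M →ₗ[R] R) (m : M) (n : N) : contractFst f (m ⊗ₜ[R] n) = f m • n :=
  rfl

@[simp]
theorem contractSnd_tmul (f : N →ₗ[R] R) (m : M) (n : N) : contractSnd f (m ⊗ₜ[R] n) = f n • m :=
  rfl

theorem contractFst_lTensor (f : M →ₗ[R] R) (g : N →ₗ[R] P) (t : M ⊗[R] N) :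
    contractFst f (LinearMap.lTensor M g t) = g (contractFst f t) := by
  induction t <;> simp_all

theorem contractSnd_rTensor (f : N →ₗ[R] R) (g : M →ₗ[R] P) (t : M ⊗[R] N) :
    contractSnd f (LinearMap.rTensor N g t) = g (contractSnd f t) := by
  induction t <;> simp_all

theorem contractFst_rTensor (f : P →ₗ[R] R) (g : M →ₗ[R] P) (t : M ⊗[R] N) :
    contractFst f (LinearMap.rTensor N g t) = contractFst (f ∘ₗ g) t := by
  induction t <;> simp_all

theorem contractSnd_lTensor (f : P →ₗ[R] R) (g : N →ₗ[R] P) (t : M ⊗[R] N) :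
    contractSnd f (LinearMap.lTensor M g t) = contractSnd (f ∘ₗ g) t := by
  induction t <;> simp_all

theorem rTensor_contractFst_assoc_symm (f : M →ₗ[R] R) (t : M ⊗[R] (N ⊗[R] P)) :
    LinearMap.rTensor P (contractFst f) ((TensorProduct.assoc R M N P).symm t) =
      contractFst f t := by
  have h : LinearMap.rTensor P (contractFst f) ∘ₗ
      (TensorProduct.assoc R M N P).symm.toLinearMap = contractFst f := by
    ext; simp [TensorProduct.smul_tmul']
  exact DFunLike.congr_fun h t

theorem lTensor_contractSnd_assoc (f : P →ₗ[R] R) (t : (M ⊗[R] N) ⊗[R] P) :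
    LinearMap.lTensor M (contractSnd f) (TensorProduct.assoc R M N P t) = contractSnd f t := by
  have h : LinearMap.lTensor M (contractSnd f) ∘ₗ
      (TensorProduct.assoc R M N P).toLinearMap = contractSnd f := by
    ext; simp
  exact DFunLike.congr_fun h t

theorem contractFst_lift_assoc_symm_tmul (σ : M →ₗ[R] N →ₗ[R] R) (m : M) (t : N ⊗[R] P) :
    contractFst (TensorProduct.lift σ) ((TensorProduct.assoc R M N P).symm (m ⊗ₜ t)) =
      contractFst (σ m) t := by
  induction t <;> simp_all [TensorProduct.tmul_add]

theorem contractSnd_lift_assoc_tmul (σ : N →ₗ[R] P →ₗ[R] R) (t : M ⊗[R] N) (p : P) :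
    contractSnd (TensorProduct.lift σ) (TensorProduct.assoc R M N P (t ⊗ₜ p)) =
      contractSnd (σ.flip p) t := by
  induction t <;> simp_all [TensorProduct.add_tmul]

-- Both sides are `t₁ ⊗ σ(t₂, s₁) s₂`.
theorem rTensor_contractSnd_flip (σ : N →ₗ[R] P →ₗ[R] R) (t : M ⊗[R] N) (s : P ⊗[R] Q) :
    LinearMap.rTensor Q (contractSnd.flip t ∘ₗ σ.flip) s =
      LinearMap.lTensor M (contractFst.flip s ∘ₗ σ) t := by
  induction t with
  | zero => simp
  | add t t' ht ht' => simp [LinearMap.add_comp, LinearMap.rTensor_add, ht, ht']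
  | tmul m n =>
    induction s with
    | zero => simp
    | add s s' hs hs' => simp_all [TensorProduct.tmul_add]
    | tmul p q => simp [TensorProduct.smul_tmul]

end Contraction

section PairApply

variable (f g : C →ₗ[K] K) (t : C ⊗[K] C)

theorem pairApply_eq_apply_contractFst : pairApply f g t = g (contractFst f t) := by
  induction t <;> simp_all [pairApply]

theorem pairApply_eq_apply_contractSnd : pairApply f g t = f (contractSnd g t) := by
  induction t <;> simp_all [pairApply, mul_comm]

end PairApply

section Hit

/-- The left hit action `f ⇀ c = c₁ f(c₂)` of the functionals on a coalgebra, linear in `f`. -/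
def leftHit (Δ : C →ₗ[K] C ⊗[K] C) : (C →ₗ[K] K) →ₗ[K] C →ₗ[K] C :=
  LinearMap.lcomp K C Δ ∘ₗ contractSnd

/-- The right hit action `c ↼ f = f(c₁) c₂` of the functionals on a coalgebra, linear in `f`. -/
def rightHit (Δ : C →ₗ[K] C ⊗[K] C) : (C →ₗ[K] K) →ₗ[K] C →ₗ[K] C :=
  LinearMap.lcomp K C Δ ∘ₗ contractFst

variable {Δ : C →ₗ[K] C ⊗[K] C}

theorem leftHit_apply (f : C →ₗ[K] K) (c : C) : leftHit Δ f c = contractSnd f (Δ c) := rfl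

theorem rightHit_apply (f : C →ₗ[K] K) (c : C) : rightHit Δ f c = contractFst f (Δ c) := rfl

theorem comul_leftHit (hΔ : Coassoc Δ) (f : C →ₗ[K] K) (c : C) :
    Δ (leftHit Δ f c) = LinearMap.lTensor C (leftHit Δ f) (Δ c) :=
  calc Δ (leftHit Δ f c)
    _ = contractSnd f (LinearMap.rTensor C Δ (Δ c)) := (contractSnd_rTensor f Δ (Δ c)).symm
    _ = LinearMap.lTensor C (contractSnd f)
          (TensorProduct.assoc K C C C (LinearMap.rTensor C Δ (Δ c))) :=
      (lTensor_contractSnd_assoc f _).symm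
    _ = LinearMap.lTensor C (contractSnd f) (LinearMap.lTensor C Δ (Δ c)) :=
      congrArg _ (hΔ c)
    _ = LinearMap.lTensor C (leftHit Δ f) (Δ c) := (LinearMap.lTensor_comp_apply C _ _ _).symm

theorem comul_rightHit (hΔ : Coassoc Δ) (f : C →ₗ[K] K) (c : C) :
    Δ (rightHit Δ f c) = LinearMap.rTensor C (rightHit Δ f) (Δ c) :=
  calc Δ (rightHit Δ f c)
    _ = contractFst f (LinearMap.lTensor C Δ (Δ c)) := (contractFst_lTensor f Δ (Δ c)).symm
    _ = LinearMap.rTensor C (contractFst f)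
          ((TensorProduct.assoc K C C C).symm (LinearMap.lTensor C Δ (Δ c))) :=
      (rTensor_contractFst_assoc_symm f _).symm
    _ = LinearMap.rTensor C (contractFst f) (LinearMap.rTensor C Δ (Δ c)) :=
      congrArg _ ((LinearEquiv.symm_apply_eq _).2 (hΔ c).symm)
    _ = LinearMap.rTensor C (rightHit Δ f) (Δ c) := (LinearMap.rTensor_comp_apply C _ _ _).symm

theorem rightHit_leftHit_comm (hΔ : Coassoc Δ) (f g : C →ₗ[K] K) (c : C) :
    rightHit Δ f (leftHit Δ g c) = leftHit Δ g (rightHit Δ f c) := by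
  rw [rightHit_apply, comul_leftHit hΔ, contractFst_lTensor, rightHit_apply]

theorem leftHit_pairApply_comp (hΔ : Coassoc Δ) (f g : C →ₗ[K] K) (c : C) :
    leftHit Δ (pairApply f g ∘ₗ Δ) c = leftHit Δ f (leftHit Δ g c) := by
  have h : pairApply f g ∘ₗ Δ = f ∘ₗ leftHit Δ g :=
    LinearMap.ext fun x => pairApply_eq_apply_contractSnd f g (Δ x)
  rw [h, leftHit_apply, ← contractSnd_lTensor, ← comul_leftHit hΔ, leftHit_apply f]

theorem rightHit_pairApply_comp (hΔ : Coassoc Δ) (f g : C →ₗ[K] K) (c : C) :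
    rightHit Δ (pairApply f g ∘ₗ Δ) c = rightHit Δ g (rightHit Δ f c) := by
  have h : pairApply f g ∘ₗ Δ = g ∘ₗ rightHit Δ f :=
    LinearMap.ext fun x => pairApply_eq_apply_contractFst f g (Δ x)
  rw [h, rightHit_apply, ← contractFst_rTensor, ← comul_rightHit hΔ, rightHit_apply g]

end Hit

section MuForm

variable {Δ : C →ₗ[K] C ⊗[K] C}

theorem muForm_tmul (σ τ : C →ₗ[K] C →ₗ[K] K) (c d : C) :
    muForm Δ σ τ (c ⊗ₜ d) = leftHit Δ (σ.flip d) c - rightHit Δ (τ c) d := by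
  rw [leftHit_apply, rightHit_apply, ← contractSnd_lift_assoc_tmul,
    ← contractFst_lift_assoc_symm_tmul]
  rfl

theorem muForm_comp_mk (σ τ : C →ₗ[K] C →ₗ[K] K) (c : C) :
    muForm Δ σ τ ∘ₗ TensorProduct.mk K C C c =
      contractSnd.flip (Δ c) ∘ₗ σ.flip - rightHit Δ (τ c) :=
  LinearMap.ext fun d => muForm_tmul σ τ c d

theorem muForm_comp_mk_flip (σ τ : C →ₗ[K] C →ₗ[K] K) (d : C) :
    muForm Δ σ τ ∘ₗ (TensorProduct.mk K C C).flip d =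
      leftHit Δ (σ.flip d) - contractFst.flip (Δ d) ∘ₗ τ :=
  LinearMap.ext fun c => muForm_tmul σ τ c d

theorem comul_muForm_tmul (hΔ : Coassoc Δ) (σ τ : C →ₗ[K] C →ₗ[K] K) (c d : C) :
    Δ (muForm Δ σ τ (c ⊗ₜ d)) =
      LinearMap.lTensor C (leftHit Δ (σ.flip d)) (Δ c) -
        LinearMap.rTensor C (rightHit Δ (τ c)) (Δ d) := by
  rw [muForm_tmul, map_sub, comul_leftHit hΔ, comul_rightHit hΔ]

theorem isCovariant_muForm (hΔ : Coassoc Δ) (σ τ : C →ₗ[K] C →ₗ[K] K) :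
    IsCovariant Δ (muForm Δ σ σ) (muForm Δ τ τ) (muForm Δ σ τ) := by
  constructor <;> intro c d <;>
    rw [comul_muForm_tmul hΔ, muForm_comp_mk, muForm_comp_mk_flip, LinearMap.rTensor_sub,
      LinearMap.lTensor_sub, LinearMap.sub_apply, LinearMap.sub_apply,
      rTensor_contractSnd_flip] <;>
    abel

theorem isCoderivation_muForm (hΔ : Coassoc Δ) (σ : C →ₗ[K] C →ₗ[K] K) :
    IsCoderivation Δ (muForm Δ σ σ) :=
  (isCovariant_muForm hΔ σ σ).2

theorem muForm_associator (hΔ : Coassoc Δ) (σ τ : C →ₗ[K] C →ₗ[K] K) (c d e : C) :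
    muForm Δ σ τ (muForm Δ σ τ (c ⊗ₜ d) ⊗ₜ e) - muForm Δ σ τ (c ⊗ₜ muForm Δ σ τ (d ⊗ₜ e)) =
      leftHit Δ (pairApply (σ.flip e) (σ.flip d) ∘ₗ Δ - σ.flip (leftHit Δ (σ.flip e) d)
          + σ.flip (rightHit Δ (τ d) e)) c -
        rightHit Δ (τ (leftHit Δ (σ.flip d) c) - τ (rightHit Δ (τ c) d)
          + pairApply (τ d) (τ c) ∘ₗ Δ) e := by
  simp only [muForm_tmul, map_sub, map_add, LinearMap.sub_apply, LinearMap.add_apply,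
    leftHit_pairApply_comp hΔ, rightHit_pairApply_comp hΔ, rightHit_leftHit_comm hΔ]
  abel

end MuForm

/-- Theorem 4.13: `(C, δ_σ, δ_τ, μ)` is a covariant bialgebra iff
Eq. (4.20) holds. -/
theorem covariant_bialgebra_iff_eq420
    (Δ : C →ₗ[K] C ⊗[K] C) (hΔ : Coassoc Δ)
    (σ τ : C →ₗ[K] C →ₗ[K] K) :
    (IsCoderivation Δ (muForm Δ σ σ) ∧ IsCoderivation Δ (muForm Δ τ τ) ∧
      IsAssocMul (muForm Δ σ τ) ∧
      IsCovariant Δ (muForm Δ σ σ) (muForm Δ τ τ) (muForm Δ σ τ)) ↔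
    (∀ c d e : C,
      (TensorProduct.rid K C) (LinearMap.lTensor C
        (pairApply (σ.flip e) (σ.flip d) ∘ₗ Δ
          - σ.flip ((TensorProduct.rid K C) (LinearMap.lTensor C (σ.flip e) (Δ d)))
          + σ.flip ((TensorProduct.lid K C) (LinearMap.rTensor C (τ d) (Δ e)))) (Δ c)) =
      (TensorProduct.lid K C) (LinearMap.rTensor C
        (τ ((TensorProduct.rid K C) (LinearMap.lTensor C (σ.flip d) (Δ c)))
          - τ ((TensorProduct.lid K C) (LinearMap.rTensor C (τ c) (Δ d)))
          + pairApply (τ d) (τ c) ∘ₗ Δ) (Δ e))) := by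
  constructor
  · rintro ⟨-, -, hassoc, -⟩ c d e
    exact sub_eq_zero.1 ((muForm_associator hΔ σ τ c d e).symm.trans (sub_eq_zero.2 (hassoc c d e)))
  · intro heq
    have hassoc : IsAssocMul (muForm Δ σ τ) := fun c d e =>
      sub_eq_zero.1 ((muForm_associator hΔ σ τ c d e).trans (sub_eq_zero.2 (heq c d e)))
    exact ⟨isCoderivation_muForm hΔ σ, isCoderivation_muForm hΔ τ, hassoc,
      isCovariant_muForm hΔ σ τ⟩

end
end

section
/- Let C be a coalgebra over a field K, let σ : C × C → K be a bilinear form, and define the product cd = μ_σ(c⊗d) = c₁σ(c₂, d) − σ(c, d₁)d₂. Then σ is a solution of the coassociative Yang-Baxter equation, i.e. σ(c₁, e)σ(c₂, d) − σ(c, d₁)σ(d₂, e) + σ(d, e₁)σ(c, e₂) = 0 for all c, d, e ∈ C, if and only if, for all c, d, e ∈ C: σ(cd, e) = −σ(d, e₁)σ(c, e₂) and σ(c, de) = σ(c₁, e)σ(c₂, d). -/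
open TensorProduct

noncomputable section

variable {K : Type*} [Field K] {C : Type*} [AddCommGroup C] [Module K C]

/-!
A linear functional `f` sends `cd = c₁σ(c₂, d) − τ(c, d₁)d₂` to `f(c₁)σ(c₂, d) − τ(c, d₁)f(d₂)`.
With `f = τ(·, e)`, resp. `f = σ(c, ·)` on the product `de`, this is two of the three terms of one
of the two Yang-Baxter equations for `(σ, τ)`, so each equation is a rearrangement of one of the
multiplicativity identities. The diagonal case `τ = σ`, where the two equations coincide, is the
theorem.
-/

theorem pairApply_tmul (f g : C →ₗ[K] K) (x y : C) :
    pairApply f g (x ⊗ₜ y) = f x * g y := rfl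

theorem map_rid_lTensor_lift_assoc_tmul (f : C →ₗ[K] K) (σ : C →ₗ[K] C →ₗ[K] K)
    (t : C ⊗[K] C) (d : C) :
    f (TensorProduct.rid K C (LinearMap.lTensor C (TensorProduct.lift σ)
      (TensorProduct.assoc K C C C (t ⊗ₜ d)))) = pairApply f (σ.flip d) t := by
  induction t using TensorProduct.induction_on with
  | zero => simp
  | tmul x y => simp [pairApply_tmul, mul_comm]
  | add s t hs ht => simp only [TensorProduct.add_tmul, map_add, hs, ht]

theorem map_lid_rTensor_lift_assoc_symm_tmul (f : C →ₗ[K] K) (τ : C →ₗ[K] C →ₗ[K] K)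
    (c : C) (t : C ⊗[K] C) :
    f (TensorProduct.lid K C (LinearMap.rTensor C (TensorProduct.lift τ)
      ((TensorProduct.assoc K C C C).symm (c ⊗ₜ t)))) = pairApply (τ c) f t := by
  induction t using TensorProduct.induction_on with
  | zero => simp
  | tmul x y => simp [pairApply_tmul]
  | add s t hs ht => simp only [TensorProduct.tmul_add, map_add, hs, ht]

theorem map_muForm_tmul (Δ : C →ₗ[K] C ⊗[K] C) (σ τ : C →ₗ[K] C →ₗ[K] K)
    (f : C →ₗ[K] K) (c d : C) :
    f (muForm Δ σ τ (c ⊗ₜ d)) =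
      pairApply f (σ.flip d) (Δ c) - pairApply (τ c) f (Δ d) := by
  simp only [muForm, LinearMap.sub_apply, map_sub, LinearMap.comp_apply,
    LinearEquiv.coe_coe, LinearMap.rTensor_tmul, LinearMap.lTensor_tmul,
    map_rid_lTensor_lift_assoc_tmul, map_lid_rTensor_lift_assoc_symm_tmul]

theorem cybe_iff_multiplicativity_general
    (Δ : C →ₗ[K] C ⊗[K] C) (σ τ : C →ₗ[K] C →ₗ[K] K) :
    IsCYBP Δ σ τ ↔
      ∀ c d e : C,
        τ (muForm Δ σ τ (c ⊗ₜ d)) e = - pairApply (τ d) (τ c) (Δ e) ∧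
        σ c (muForm Δ σ τ (d ⊗ₜ e)) = pairApply (σ.flip e) (σ.flip d) (Δ c) := by
  have left_product (c d e : C) : τ (muForm Δ σ τ (c ⊗ₜ d)) e =
      pairApply (τ.flip e) (σ.flip d) (Δ c) - pairApply (τ c) (τ.flip e) (Δ d) :=
    map_muForm_tmul Δ σ τ (τ.flip e) c d
  have right_product (c d e : C) : σ c (muForm Δ σ τ (d ⊗ₜ e)) =
      pairApply (σ c) (σ.flip e) (Δ d) - pairApply (τ d) (σ c) (Δ e) :=
    map_muForm_tmul Δ σ τ (σ c) d e
  simp only [left_product, right_product]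
  constructor
  · rintro ⟨hσ, hτ⟩ c d e
    exact ⟨eq_neg_of_add_eq_zero_left (hτ c d e), by linear_combination -hσ c d e⟩
  · intro h
    exact ⟨fun c d e ↦ by linear_combination -(h c d e).2,
      fun c d e ↦ eq_neg_iff_add_eq_zero.mp (h c d e).1⟩

/-- Proposition 5.11: `σ` is a solution of the coassociative
Yang-Baxter equation iff `σ(cd, e) = −σ(d,e₁)σ(c,e₂)` and
`σ(c, de) = σ(c₁,e)σ(c₂,d)`. -/
theorem cybe_iff_multiplicativity
    (Δ : C →ₗ[K] C ⊗[K] C) (hΔ : Coassoc Δ)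
    (σ : C →ₗ[K] C →ₗ[K] K) :
    (∀ c d e : C, pairApply (σ.flip e) (σ.flip d) (Δ c)
        - pairApply (σ c) (σ.flip e) (Δ d) + pairApply (σ d) (σ c) (Δ e) = 0) ↔
      ∀ c d e : C,
        σ (muForm Δ σ σ (c ⊗ₜ d)) e = - pairApply (σ d) (σ c) (Δ e) ∧
        σ c (muForm Δ σ σ (d ⊗ₜ e)) = pairApply (σ.flip e) (σ.flip d) (Δ c) :=
  and_self_iff.symm.trans (cybe_iff_multiplicativity_general Δ σ σ)

end
end

section
/- Let (C, Δ_C) and (D, Δ_D) be coalgebras over a field K forming a double coalgebra: C carries a left D-comodule structure ρ : C → D⊗C, written ρ(c) = c₍₋₁₎ ⊗ c₍₀₎, and D carries a right C-comodule structure λ : D → D⊗C, written λ(d) = d₍₀₎ ⊗ d₍₁₎, satisfying for all c ∈ C, d ∈ D: c₍₋₁₎ ⊗ c₍₀₎₁ ⊗ c₍₀₎₂ = c₁₍₋₁₎ ⊗ c₁₍₀₎ ⊗ c₂ + (c₍₋₁₎)₍₀₎ ⊗ (c₍₋₁₎)₍₁₎ ⊗ c₍₀₎ and d₍₀₎₁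 ⊗ d₍₀₎₂ ⊗ d₍₁₎ = d₁ ⊗ d₂₍₀₎ ⊗ d₂₍₁₎ + d₍₀₎ ⊗ (d₍₁₎)₍₋₁₎ ⊗ (d₍₁₎)₍₀₎. Then the linear map Δ : C⊗D → (C⊗D)⊗(C⊗D) defined by Δ(c ⊗ d) = c₁ ⊗ (c₂)₍₋₁₎ ⊗ (c₂)₍₀₎ ⊗ d + c ⊗ (d₁)₍₀₎ ⊗ (d₁)₍₁₎ ⊗ d₂ is coassociative, so (C⊗D, Δ) is a coassociative coalgebra. -/
open TensorProduct

noncomputable section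

variable {K : Type*} [Field K] {C : Type*} [AddCommGroup C] [Module K C]

/-!
Write `H = C ⊗ D`. The maps `P c = c₁ ⊗ (c₂)₍₋₁₎ ⊗ (c₂)₍₀₎` and `Q d = (d₁)₍₀₎ ⊗ (d₁)₍₁₎ ⊗ d₂`
make `C` a left and `D` a right comodule over `(H, Δ)`, where `Δ = P ⊗ id + id ⊗ Q`; each of the two
compatibility conditions gives one of these facts. Coassociativity of `Δ` then follows: the comodule
axioms account for the terms starting with `P` on one side and for those starting with `Q` on the
other, and the remaining cross terms agree because `P ⊗ id` and `id ⊗ Q` act on different factors.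
-/

section TensorCoaction

variable {R M N A A' B B' H X Y : Type*} [CommSemiring R]
  [AddCommMonoid M] [Module R M] [AddCommMonoid N] [Module R N]
  [AddCommMonoid A] [Module R A] [AddCommMonoid A'] [Module R A']
  [AddCommMonoid B] [Module R B] [AddCommMonoid B'] [Module R B']
  [AddCommMonoid H] [Module R H]
  [AddCommMonoid X] [Module R X] [AddCommMonoid Y] [Module R Y]

variable (X) in
/-- The map `id ⊗ f` rebracketed so that the last factor of `f` stays outermost:
`x ⊗ m ↦ ∑ (x ⊗ aᵢ) ⊗ bᵢ` for `f m = ∑ aᵢ ⊗ bᵢ`. For a right coaction `f` this is the coaction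
induced on `X ⊗ M`. -/
def lTensorAssoc (f : M →ₗ[R] A ⊗[R] B) : X ⊗[R] M →ₗ[R] (X ⊗[R] A) ⊗[R] B :=
  (TensorProduct.assoc R X A B).symm.toLinearMap ∘ₗ f.lTensor X

variable (X) in
/-- The map `f ⊗ id` rebracketed so that the first factor of `f` stays outermost:
`m ⊗ x ↦ ∑ aᵢ ⊗ (bᵢ ⊗ x)` for `f m = ∑ aᵢ ⊗ bᵢ`. For a left coaction `f` this is the coaction
induced on `M ⊗ X`. -/
def rTensorAssoc (f : M →ₗ[R] A ⊗[R] B) : M ⊗[R] X →ₗ[R] A ⊗[R] (B ⊗[R] X) :=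
  (TensorProduct.assoc R A B X).toLinearMap ∘ₗ f.rTensor X

theorem lTensorAssoc_add (f g : M →ₗ[R] A ⊗[R] B) :
    lTensorAssoc X (f + g) = lTensorAssoc X f + lTensorAssoc X g := by
  simp only [lTensorAssoc, LinearMap.lTensor_add, LinearMap.comp_add]

theorem rTensorAssoc_add (f g : M →ₗ[R] A ⊗[R] B) :
    rTensorAssoc X (f + g) = rTensorAssoc X f + rTensorAssoc X g := by
  simp only [rTensorAssoc, LinearMap.rTensor_add, LinearMap.comp_add]

theorem lTensorAssoc_comp (f : M →ₗ[R] A ⊗[R] B) (g : N →ₗ[R] M) :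
    lTensorAssoc X (f ∘ₗ g) = lTensorAssoc X f ∘ₗ g.lTensor X := by
  simp only [lTensorAssoc, LinearMap.lTensor_comp, LinearMap.comp_assoc]

theorem rTensorAssoc_comp (f : M →ₗ[R] A ⊗[R] B) (g : N →ₗ[R] M) :
    rTensorAssoc X (f ∘ₗ g) = rTensorAssoc X f ∘ₗ g.rTensor X := by
  simp only [rTensorAssoc, LinearMap.rTensor_comp, LinearMap.comp_assoc]

theorem lTensorAssoc_lTensor_comp (f : M →ₗ[R] A ⊗[R] B) (g : B →ₗ[R] B') :
    lTensorAssoc X (g.lTensor A ∘ₗ f) = g.lTensor (X ⊗[R] A) ∘ₗ lTensorAssoc X f := by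
  rw [lTensorAssoc, lTensorAssoc, LinearMap.lTensor_comp, ← LinearMap.comp_assoc,
    ← LinearMap.comp_assoc]
  congr 1
  ext
  rfl

theorem rTensorAssoc_rTensor_comp (f : M →ₗ[R] A ⊗[R] B) (g : A →ₗ[R] A') :
    rTensorAssoc X (g.rTensor B ∘ₗ f) = g.rTensor (B ⊗[R] X) ∘ₗ rTensorAssoc X f := by
  rw [rTensorAssoc, rTensorAssoc, LinearMap.rTensor_comp, ← LinearMap.comp_assoc,
    ← LinearMap.comp_assoc]
  congr 1
  ext
  rfl

theorem lTensorAssoc_rTensor_comp (f : M →ₗ[R] A ⊗[R] B) (g : A →ₗ[R] A') :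
    lTensorAssoc X (g.rTensor B ∘ₗ f) = (g.lTensor X).rTensor B ∘ₗ lTensorAssoc X f := by
  rw [lTensorAssoc, lTensorAssoc, LinearMap.lTensor_comp, ← LinearMap.comp_assoc,
    ← LinearMap.comp_assoc, LinearMap.rTensor_lTensor_comp_assoc_symm]

theorem rTensorAssoc_lTensor_comp (f : M →ₗ[R] A ⊗[R] B) (g : B →ₗ[R] B') :
    rTensorAssoc X (g.lTensor A ∘ₗ f) = (g.rTensor X).lTensor A ∘ₗ rTensorAssoc X f := by
  rw [rTensorAssoc, rTensorAssoc, LinearMap.rTensor_comp, ← LinearMap.comp_assoc,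
    ← LinearMap.comp_assoc, LinearMap.lTensor_rTensor_comp_assoc]

theorem rTensorAssoc_lTensorAssoc (f : M →ₗ[R] A ⊗[R] B) :
    rTensorAssoc Y (lTensorAssoc X f) =
      lTensorAssoc X (rTensorAssoc Y f) ∘ₗ (TensorProduct.assoc R X M Y).toLinearMap := by
  ext x m y
  change TensorProduct.assoc R _ _ _ ((TensorProduct.assoc R _ _ _).symm (x ⊗ₜ f m) ⊗ₜ y) =
    (TensorProduct.assoc R _ _ _).symm (x ⊗ₜ TensorProduct.assoc R _ _ _ (f m ⊗ₜ y))
  generalize f m = t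
  induction t with
  | zero => simp
  | tmul => rfl
  | add => simp_all [TensorProduct.tmul_add, TensorProduct.add_tmul]

theorem rTensorAssoc_lTensorAssoc_comp_lTensorAssoc (f : M →ₗ[R] A ⊗[R] B)
    (g : N →ₗ[R] M ⊗[R] Y) :
    rTensorAssoc Y (lTensorAssoc X f) ∘ₗ lTensorAssoc X g =
      lTensorAssoc X (rTensorAssoc Y f ∘ₗ g) := by
  rw [rTensorAssoc_lTensorAssoc, lTensorAssoc_comp, LinearMap.comp_assoc]
  congr 1
  rw [← LinearEquiv.eq_toLinearMap_symm_comp, lTensorAssoc]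

theorem lTensorAssoc_rTensorAssoc_comp_rTensorAssoc (f : M →ₗ[R] A ⊗[R] B)
    (g : N →ₗ[R] X ⊗[R] M) :
    lTensorAssoc X (rTensorAssoc Y f) ∘ₗ rTensorAssoc Y g =
      rTensorAssoc Y (lTensorAssoc X f ∘ₗ g) := by
  rw [rTensorAssoc_comp, rTensorAssoc_lTensorAssoc, LinearMap.comp_assoc]
  rfl

theorem rTensorAssoc_tensor_comp_assoc (f : M →ₗ[R] A ⊗[R] B) :
    rTensorAssoc (X ⊗[R] Y) f ∘ₗ (TensorProduct.assoc R M X Y).toLinearMap =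
      (TensorProduct.assoc R B X Y).toLinearMap.lTensor A ∘ₗ
        rTensorAssoc Y (rTensorAssoc X f) := by
  ext m x y
  change TensorProduct.assoc R _ _ _ (f m ⊗ₜ (x ⊗ₜ y)) =
    (TensorProduct.assoc R B X Y).toLinearMap.lTensor A
      (TensorProduct.assoc R _ _ _ (TensorProduct.assoc R _ _ _ (f m ⊗ₜ x) ⊗ₜ y))
  generalize f m = t
  induction t with
  | zero => simp
  | tmul => rfl
  | add => simp_all [TensorProduct.add_tmul]

theorem lTensorAssoc_tensor_comp_assoc_symm (f : M →ₗ[R] A ⊗[R] B) :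
    lTensorAssoc (X ⊗[R] Y) f ∘ₗ (TensorProduct.assoc R X Y M).symm.toLinearMap =
      (TensorProduct.assoc R X Y A).symm.toLinearMap.rTensor B ∘ₗ
        lTensorAssoc X (lTensorAssoc Y f) := by
  ext x y m
  change (TensorProduct.assoc R _ _ _).symm ((x ⊗ₜ y) ⊗ₜ f m) =
    (TensorProduct.assoc R X Y A).symm.toLinearMap.rTensor B
      ((TensorProduct.assoc R _ _ _).symm (x ⊗ₜ (TensorProduct.assoc R _ _ _).symm (y ⊗ₜ f m)))
  generalize f m = t
  induction t with
  | zero => simp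
  | tmul => rfl
  | add => simp_all [TensorProduct.tmul_add]

theorem rTensorAssoc_comp_lTensor (f : M →ₗ[R] A ⊗[R] B) (g : X →ₗ[R] Y) :
    rTensorAssoc Y f ∘ₗ g.lTensor M = (g.lTensor B).lTensor A ∘ₗ rTensorAssoc X f := by
  rw [rTensorAssoc, rTensorAssoc, LinearMap.comp_assoc, LinearMap.rTensor_comp_lTensor,
    ← LinearMap.lTensor_comp_rTensor, ← LinearMap.comp_assoc, ← LinearMap.comp_assoc]
  congr 1
  ext
  rfl

theorem rTensorAssoc_rTensorAssoc_comp_lTensorAssoc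
    (f : M →ₗ[R] A ⊗[R] A') (g : N →ₗ[R] B' ⊗[R] B) :
    rTensorAssoc B (rTensorAssoc B' f) ∘ₗ lTensorAssoc M g =
      (lTensorAssoc A' g).lTensor A ∘ₗ rTensorAssoc N f := by
  have rebracket : rTensorAssoc B (rTensorAssoc B' f) ∘ₗ lTensorAssoc M g =
      (TensorProduct.assoc R A' B' B).symm.toLinearMap.lTensor A ∘ₗ
        rTensorAssoc (B' ⊗[R] B) f ∘ₗ g.lTensor M := by
    rw [lTensorAssoc, ← LinearMap.comp_assoc, ← LinearMap.comp_assoc]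
    congr 1
    rw [LinearEquiv.comp_toLinearMap_symm_eq, LinearMap.comp_assoc, rTensorAssoc_tensor_comp_assoc,
      ← LinearMap.comp_assoc, ← LinearMap.lTensor_comp, LinearEquiv.symm_comp,
      LinearMap.lTensor_id, LinearMap.id_comp]
  rw [rebracket, rTensorAssoc_comp_lTensor, ← LinearMap.comp_assoc, ← LinearMap.lTensor_comp]
  rfl

theorem rTensor_rTensorAssoc_comp_lTensorAssoc
    (f : M →ₗ[R] A ⊗[R] A') (g : N →ₗ[R] B' ⊗[R] B) :
    (rTensorAssoc B' f).rTensor B ∘ₗ lTensorAssoc M g =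
      lTensorAssoc A (lTensorAssoc A' g) ∘ₗ rTensorAssoc N f := by
  have h := rTensorAssoc_rTensorAssoc_comp_lTensorAssoc f g
  rwa [rTensorAssoc, LinearMap.comp_assoc, ← LinearEquiv.eq_toLinearMap_symm_comp,
    ← LinearMap.comp_assoc] at h

/-- `ρ` is a left coaction of the (not necessarily counital) coalgebra `(H, Δ)` on `M`. With
`ρ = Δ` this is coassociativity of `Δ`. -/
def IsLeftCoaction (Δ : H →ₗ[R] H ⊗[R] H) (ρ : M →ₗ[R] H ⊗[R] M) : Prop :=
  ρ.lTensor H ∘ₗ ρ = rTensorAssoc M Δ ∘ₗ ρ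

/-- `lam` is a right coaction of the (not necessarily counital) coalgebra `(H, Δ)` on `N`. With
`lam = Δ` this is coassociativity of `Δ`. -/
def IsRightCoaction (Δ : H →ₗ[R] H ⊗[R] H) (lam : N →ₗ[R] N ⊗[R] H) : Prop :=
  lam.rTensor H ∘ₗ lam = lTensorAssoc N Δ ∘ₗ lam

variable {Δ : H →ₗ[R] H ⊗[R] H} {ρ : M →ₗ[R] H ⊗[R] M} {lam : N →ₗ[R] N ⊗[R] H}

theorem IsLeftCoaction.lTensorAssoc_comp_self (hρ : IsLeftCoaction Δ ρ) :
    lTensorAssoc H ρ ∘ₗ ρ = Δ.rTensor M ∘ₗ ρ := by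
  rw [lTensorAssoc, LinearMap.comp_assoc, hρ, LinearEquiv.toLinearMap_symm_comp_eq, rTensorAssoc,
    LinearMap.comp_assoc]

theorem IsRightCoaction.rTensorAssoc_comp_self (hlam : IsRightCoaction Δ lam) :
    rTensorAssoc H lam ∘ₗ lam = Δ.lTensor N ∘ₗ lam := by
  rw [rTensorAssoc, LinearMap.comp_assoc, hlam, ← LinearEquiv.eq_toLinearMap_symm_comp,
    lTensorAssoc, LinearMap.comp_assoc]

theorem IsLeftCoaction.isRightCoaction_self (hΔ : IsLeftCoaction Δ Δ) : IsRightCoaction Δ Δ :=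
  hΔ.lTensorAssoc_comp_self.symm

theorem IsLeftCoaction.tensor_right (hρ : IsLeftCoaction Δ ρ) :
    IsLeftCoaction Δ (rTensorAssoc X ρ) := by
  have rebracket : (rTensorAssoc X ρ).lTensor H ∘ₗ rTensorAssoc X ρ =
      (TensorProduct.assoc R H M X).toLinearMap.lTensor H ∘ₗ
        rTensorAssoc X (ρ.lTensor H ∘ₗ ρ) := by
    rw [rTensorAssoc_lTensor_comp, ← LinearMap.comp_assoc, ← LinearMap.lTensor_comp]
    rfl
  rw [IsLeftCoaction, rebracket, hρ, rTensorAssoc_comp, ← LinearMap.comp_assoc,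
    ← rTensorAssoc_tensor_comp_assoc, LinearMap.comp_assoc]
  rfl

theorem IsRightCoaction.tensor_left (hlam : IsRightCoaction Δ lam) :
    IsRightCoaction Δ (lTensorAssoc X lam) := by
  have rebracket : (lTensorAssoc X lam).rTensor H ∘ₗ lTensorAssoc X lam =
      (TensorProduct.assoc R X N H).symm.toLinearMap.rTensor H ∘ₗ
        lTensorAssoc X (lam.rTensor H ∘ₗ lam) := by
    rw [lTensorAssoc_rTensor_comp, ← LinearMap.comp_assoc, ← LinearMap.rTensor_comp]
    rfl
  rw [IsRightCoaction, rebracket, hlam, lTensorAssoc_comp, ← LinearMap.comp_assoc,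
    ← lTensorAssoc_tensor_comp_assoc_symm, LinearMap.comp_assoc]
  rfl

/-- The map `P ⊗ id + id ⊗ Q` on `M ⊗ N`, as a comultiplication. -/
def tensorComul (P : M →ₗ[R] (M ⊗[R] N) ⊗[R] M) (Q : N →ₗ[R] N ⊗[R] (M ⊗[R] N)) :
    M ⊗[R] N →ₗ[R] (M ⊗[R] N) ⊗[R] (M ⊗[R] N) :=
  rTensorAssoc N P + lTensorAssoc M Q

theorem isLeftCoaction_tensorComul_self {P : M →ₗ[R] (M ⊗[R] N) ⊗[R] M}
    {Q : N →ₗ[R] N ⊗[R] (M ⊗[R] N)} (hP : IsLeftCoaction (tensorComul P Q) P)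
    (hQ : IsRightCoaction (tensorComul P Q) Q) :
    IsLeftCoaction (tensorComul P Q) (tensorComul P Q) := by
  set E := tensorComul P Q with hE
  set S := rTensorAssoc N P
  set T := lTensorAssoc M Q
  have hES : E = S + T := hE
  have comp_left : E.lTensor _ ∘ₗ S = rTensorAssoc _ E ∘ₗ S + rTensorAssoc _ S ∘ₗ T := by
    rw [hES, LinearMap.lTensor_add, LinearMap.add_comp, ← hES,
      rTensorAssoc_rTensorAssoc_comp_lTensorAssoc]
    exact congrArg (· + _) hP.tensor_right
  have comp_right : E.lTensor _ ∘ₗ T = rTensorAssoc _ T ∘ₗ T :=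
    hQ.tensor_left.rTensorAssoc_comp_self.symm
  calc E.lTensor _ ∘ₗ E = E.lTensor _ ∘ₗ S + E.lTensor _ ∘ₗ T := by
        rw [← LinearMap.comp_add, ← hES]
    _ = rTensorAssoc _ E ∘ₗ S + (rTensorAssoc _ S + rTensorAssoc _ T) ∘ₗ T := by
        rw [comp_left, comp_right, LinearMap.add_comp, add_assoc]
    _ = rTensorAssoc _ E ∘ₗ E := by
        rw [← rTensorAssoc_add, ← hES, ← LinearMap.comp_add, ← hES]

end TensorCoaction

section DoubleCoalgebra

variable {R M N : Type*} [CommSemiring R] [AddCommMonoid M] [Module R M]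
  [AddCommMonoid N] [Module R N]

/-- The left coaction `m ↦ m₁ ⊗ (m₂)₍₋₁₎ ⊗ (m₂)₍₀₎` of `M ⊗ N` on `M` built from a left coaction
`ρ` of `N` on `M`. -/
def leftTensorCoaction (ΔM : M →ₗ[R] M ⊗[R] M) (ρ : M →ₗ[R] N ⊗[R] M) :
    M →ₗ[R] (M ⊗[R] N) ⊗[R] M :=
  lTensorAssoc M ρ ∘ₗ ΔM

/-- The right coaction `n ↦ (n₁)₍₀₎ ⊗ (n₁)₍₁₎ ⊗ n₂` of `M ⊗ N` on `N` built from a right coaction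
`lam` of `M` on `N`. -/
def rightTensorCoaction (ΔN : N →ₗ[R] N ⊗[R] N) (lam : N →ₗ[R] N ⊗[R] M) :
    N →ₗ[R] N ⊗[R] (M ⊗[R] N) :=
  rTensorAssoc N lam ∘ₗ ΔN

variable {ΔM : M →ₗ[R] M ⊗[R] M} {ΔN : N →ₗ[R] N ⊗[R] N}
  {ρ : M →ₗ[R] N ⊗[R] M} {lam : N →ₗ[R] N ⊗[R] M}

theorem rTensorAssoc_leftTensorCoaction_comp (hM : IsLeftCoaction ΔM ΔM) :
    rTensorAssoc M (leftTensorCoaction ΔM ρ) ∘ₗ ΔM =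
      lTensorAssoc M (rTensorAssoc M ρ ∘ₗ ΔM) ∘ₗ ΔM := by
  rw [leftTensorCoaction, rTensorAssoc_comp, LinearMap.comp_assoc, ← hM.lTensorAssoc_comp_self,
    ← LinearMap.comp_assoc, rTensorAssoc_lTensorAssoc_comp_lTensorAssoc]

theorem lTensorAssoc_rightTensorCoaction_comp (hN : IsRightCoaction ΔN ΔN) :
    lTensorAssoc N (rightTensorCoaction ΔN lam) ∘ₗ ΔN =
      rTensorAssoc N (lTensorAssoc N lam ∘ₗ ΔN) ∘ₗ ΔN := by
  rw [rightTensorCoaction, lTensorAssoc_comp, LinearMap.comp_assoc, ← hN.rTensorAssoc_comp_self,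
    ← LinearMap.comp_assoc, lTensorAssoc_rTensorAssoc_comp_rTensorAssoc]

theorem lTensor_leftTensorCoaction_comp (hρ : IsLeftCoaction ΔN ρ)
    (compat : ΔM.lTensor N ∘ₗ ρ = rTensorAssoc M ρ ∘ₗ ΔM + rTensorAssoc M lam ∘ₗ ρ) :
    (leftTensorCoaction ΔM ρ).lTensor N ∘ₗ ρ =
      (lTensorAssoc M ρ).lTensor N ∘ₗ rTensorAssoc M ρ ∘ₗ ΔM +
        rTensorAssoc M (rightTensorCoaction ΔN lam) ∘ₗ ρ := by
  have mixed : (lTensorAssoc M ρ).lTensor N ∘ₗ rTensorAssoc M lam ∘ₗ ρ =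
      rTensorAssoc M (rightTensorCoaction ΔN lam) ∘ₗ ρ := by
    rw [← LinearMap.comp_assoc, ← rTensorAssoc_rTensorAssoc_comp_lTensorAssoc,
      LinearMap.comp_assoc, hρ.lTensorAssoc_comp_self, rightTensorCoaction, rTensorAssoc_comp,
      LinearMap.comp_assoc]
  rw [leftTensorCoaction, LinearMap.lTensor_comp, LinearMap.comp_assoc, compat,
    LinearMap.comp_add, mixed]

theorem rTensor_rightTensorCoaction_comp (hlam : IsRightCoaction ΔM lam)
    (compat : ΔN.rTensor M ∘ₗ lam = lTensorAssoc N lam ∘ₗ ΔN + lTensorAssoc N ρ ∘ₗ lam) :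
    (rightTensorCoaction ΔN lam).rTensor M ∘ₗ lam =
      (rTensorAssoc N lam).rTensor M ∘ₗ lTensorAssoc N lam ∘ₗ ΔN +
        lTensorAssoc N (leftTensorCoaction ΔM ρ) ∘ₗ lam := by
  have mixed : (rTensorAssoc N lam).rTensor M ∘ₗ lTensorAssoc N ρ ∘ₗ lam =
      lTensorAssoc N (leftTensorCoaction ΔM ρ) ∘ₗ lam := by
    rw [← LinearMap.comp_assoc, rTensor_rTensorAssoc_comp_lTensorAssoc,
      LinearMap.comp_assoc, hlam.rTensorAssoc_comp_self, leftTensorCoaction, lTensorAssoc_comp,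
      LinearMap.comp_assoc]
  rw [rightTensorCoaction, LinearMap.rTensor_comp, LinearMap.comp_assoc, compat,
    LinearMap.comp_add, mixed]

theorem isLeftCoaction_leftTensorCoaction (hM : IsLeftCoaction ΔM ΔM) (hρ : IsLeftCoaction ΔN ρ)
    (compat : ΔM.lTensor N ∘ₗ ρ = rTensorAssoc M ρ ∘ₗ ΔM + rTensorAssoc M lam ∘ₗ ρ) :
    IsLeftCoaction (tensorComul (leftTensorCoaction ΔM ρ) (rightTensorCoaction ΔN lam))
      (leftTensorCoaction ΔM ρ) := by
  set P := leftTensorCoaction ΔM ρ with hP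
  set Q := rightTensorCoaction ΔN lam
  have interchange : (lTensorAssoc M ρ).lTensor (M ⊗[R] N) ∘ₗ rTensorAssoc M P ∘ₗ ΔM =
      rTensorAssoc M (rTensorAssoc N P) ∘ₗ P := by
    rw [← LinearMap.comp_assoc, ← rTensorAssoc_rTensorAssoc_comp_lTensorAssoc,
      LinearMap.comp_assoc, hP, leftTensorCoaction]
  calc P.lTensor (M ⊗[R] N) ∘ₗ P
      = lTensorAssoc M (P.lTensor N ∘ₗ ρ) ∘ₗ ΔM := by
        rw [lTensorAssoc_lTensor_comp, LinearMap.comp_assoc]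
        rfl
    _ = (lTensorAssoc M ρ).lTensor (M ⊗[R] N) ∘ₗ lTensorAssoc M (rTensorAssoc M ρ ∘ₗ ΔM) ∘ₗ ΔM +
          lTensorAssoc M (rTensorAssoc M Q ∘ₗ ρ) ∘ₗ ΔM := by
        rw [lTensor_leftTensorCoaction_comp hρ compat, lTensorAssoc_add, LinearMap.add_comp,
          lTensorAssoc_lTensor_comp, LinearMap.comp_assoc]
    _ = rTensorAssoc M (rTensorAssoc N P) ∘ₗ P + rTensorAssoc M (lTensorAssoc M Q) ∘ₗ P := by
        rw [← rTensorAssoc_leftTensorCoaction_comp hM, interchange,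
          ← rTensorAssoc_lTensorAssoc_comp_lTensorAssoc, LinearMap.comp_assoc]
        rfl
    _ = rTensorAssoc M (tensorComul P Q) ∘ₗ P := by
        rw [tensorComul, rTensorAssoc_add, LinearMap.add_comp]

theorem isRightCoaction_rightTensorCoaction (hN : IsRightCoaction ΔN ΔN)
    (hlam : IsRightCoaction ΔM lam)
    (compat : ΔN.rTensor M ∘ₗ lam = lTensorAssoc N lam ∘ₗ ΔN + lTensorAssoc N ρ ∘ₗ lam) :
    IsRightCoaction (tensorComul (leftTensorCoaction ΔM ρ) (rightTensorCoaction ΔN lam))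
      (rightTensorCoaction ΔN lam) := by
  set P := leftTensorCoaction ΔM ρ
  set Q := rightTensorCoaction ΔN lam with hQ
  have interchange : (rTensorAssoc N lam).rTensor (M ⊗[R] N) ∘ₗ lTensorAssoc N Q ∘ₗ ΔN =
      lTensorAssoc N (lTensorAssoc M Q) ∘ₗ Q := by
    rw [← LinearMap.comp_assoc, rTensor_rTensorAssoc_comp_lTensorAssoc,
      LinearMap.comp_assoc, hQ, rightTensorCoaction]
  calc Q.rTensor (M ⊗[R] N) ∘ₗ Q
      = rTensorAssoc N (Q.rTensor M ∘ₗ lam) ∘ₗ ΔN := by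
        rw [rTensorAssoc_rTensor_comp, LinearMap.comp_assoc]
        rfl
    _ = (rTensorAssoc N lam).rTensor (M ⊗[R] N) ∘ₗ
            rTensorAssoc N (lTensorAssoc N lam ∘ₗ ΔN) ∘ₗ ΔN +
          rTensorAssoc N (lTensorAssoc N P ∘ₗ lam) ∘ₗ ΔN := by
        rw [rTensor_rightTensorCoaction_comp hlam compat, rTensorAssoc_add, LinearMap.add_comp,
          rTensorAssoc_rTensor_comp, LinearMap.comp_assoc]
    _ = lTensorAssoc N (lTensorAssoc M Q) ∘ₗ Q + lTensorAssoc N (rTensorAssoc N P) ∘ₗ Q := by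
        rw [← lTensorAssoc_rightTensorCoaction_comp hN, interchange,
          ← lTensorAssoc_rTensorAssoc_comp_rTensorAssoc, LinearMap.comp_assoc]
        rfl
    _ = lTensorAssoc N (tensorComul P Q) ∘ₗ Q := by
        rw [add_comm, tensorComul, lTensorAssoc_add, LinearMap.add_comp]

/-- A double coalgebra `(M, N)`: two coassociative coalgebras coacting on each other, with the two
compatibility conditions. The conditions are the equations in Sweedler notation read as equations
between linear maps. -/
structure IsDoubleCoalgebra (ΔM : M →ₗ[R] M ⊗[R] M) (ΔN : N →ₗ[R] N ⊗[R] N)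
    (ρ : M →ₗ[R] N ⊗[R] M) (lam : N →ₗ[R] N ⊗[R] M) : Prop where
  coassoc_left : IsLeftCoaction ΔM ΔM
  coassoc_right : IsLeftCoaction ΔN ΔN
  left_coaction : IsLeftCoaction ΔN ρ
  right_coaction : IsRightCoaction ΔM lam
  lTensor_comp_left : ΔM.lTensor N ∘ₗ ρ = rTensorAssoc M ρ ∘ₗ ΔM + rTensorAssoc M lam ∘ₗ ρ
  rTensor_comp_right : ΔN.rTensor M ∘ₗ lam = lTensorAssoc N lam ∘ₗ ΔN + lTensorAssoc N ρ ∘ₗ lam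

theorem double_coalgebra_tensor_coassociative_general (h : IsDoubleCoalgebra ΔM ΔN ρ lam) :
    IsLeftCoaction (tensorComul (leftTensorCoaction ΔM ρ) (rightTensorCoaction ΔN lam))
      (tensorComul (leftTensorCoaction ΔM ρ) (rightTensorCoaction ΔN lam)) :=
  isLeftCoaction_tensorComul_self
    (isLeftCoaction_leftTensorCoaction h.coassoc_left h.left_coaction h.lTensor_comp_left)
    (isRightCoaction_rightTensorCoaction h.coassoc_right.isRightCoaction_self h.right_coaction
      h.rTensor_comp_right)

end DoubleCoalgebra

/-- Theorem 5.15: a double coalgebra `(C, D)` yields a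
coassociative comultiplication on `C ⊗ D`. -/
theorem double_coalgebra_tensor_coassociative
    {D : Type*} [AddCommGroup D] [Module K D]
    (ΔC : C →ₗ[K] C ⊗[K] C) (hC : Coassoc ΔC)
    (ΔD : D →ₗ[K] D ⊗[K] D) (hD : Coassoc ΔD)
    (ρ : C →ₗ[K] D ⊗[K] C)
    (hρ : ∀ c : C, (TensorProduct.assoc K D D C) (LinearMap.rTensor C ΔD (ρ c)) =
      LinearMap.lTensor D ρ (ρ c))
    (lam : D →ₗ[K] D ⊗[K] C)
    (hlam : ∀ d : D, (TensorProduct.assoc K D C C) (LinearMap.rTensor C lam (lam d)) =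
      LinearMap.lTensor D ΔC (lam d))
    (compat1 : ∀ c : C, LinearMap.lTensor D ΔC (ρ c) =
      (TensorProduct.assoc K D C C) (LinearMap.rTensor C ρ (ΔC c)) +
      (TensorProduct.assoc K D C C) (LinearMap.rTensor C lam (ρ c)))
    (compat2 : ∀ d : D, (TensorProduct.assoc K D D C) (LinearMap.rTensor C ΔD (lam d)) =
      LinearMap.lTensor D lam (ΔD d) + LinearMap.lTensor D ρ (lam d))
    (E : C ⊗[K] D →ₗ[K] (C ⊗[K] D) ⊗[K] (C ⊗[K] D))
    (hE : E =
      ((TensorProduct.assoc K (C ⊗[K] D) C D).toLinearMap ∘ₗ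
        LinearMap.rTensor D (TensorProduct.assoc K C D C).symm.toLinearMap ∘ₗ
        LinearMap.rTensor D (LinearMap.lTensor C ρ) ∘ₗ
        LinearMap.rTensor D ΔC) +
      ((TensorProduct.assoc K C D (C ⊗[K] D)).symm.toLinearMap ∘ₗ
        LinearMap.lTensor C (TensorProduct.assoc K D C D).toLinearMap ∘ₗ
        LinearMap.lTensor C (LinearMap.rTensor D lam) ∘ₗ
        LinearMap.lTensor C ΔD)) :
    Coassoc E := by
  have h : IsDoubleCoalgebra ΔC ΔD ρ lam :=
    { coassoc_left := LinearMap.ext fun c ↦ (hC c).symm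
      coassoc_right := LinearMap.ext fun d ↦ (hD d).symm
      left_coaction := LinearMap.ext fun c ↦ (hρ c).symm
      right_coaction := LinearMap.ext fun d ↦ (LinearEquiv.eq_symm_apply _).2 (hlam d)
      lTensor_comp_left := LinearMap.ext compat1
      rTensor_comp_right := LinearMap.ext fun d ↦
        ((LinearEquiv.eq_symm_apply _).2 (compat2 d)).trans (map_add _ _ _) }
  have hE_tensorComul : E = tensorComul (leftTensorCoaction ΔC ρ) (rightTensorCoaction ΔD lam) := by
    simp only [hE, tensorComul, leftTensorCoaction, rightTensorCoaction, rTensorAssoc, lTensorAssoc,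
      LinearMap.rTensor_comp, LinearMap.lTensor_comp, LinearMap.comp_assoc]
  intro x
  rw [hE_tensorComul]
  exact (LinearMap.congr_fun (double_coalgebra_tensor_coassociative_general h) x).symm

end
end

section
/- Let (C, Q, T) be a Rota-Baxter cosystem over a field K. Define Δ_≻, Δ_≺ : C → C⊗C by Δ_≻(c) = c₁ ⊗ T(c₂) and Δ_≺(c) = Q(c₁) ⊗ c₂. Then (C, Δ_≻, Δ_≺) is a dendriform coalgebra, i.e. for all c ∈ C: (Δ_≻⊗id)Δ_≻(c) = (id⊗Δ_≻ + id⊗Δ_≺)Δ_≻(c), (Δ_≺⊗id)Δ_≻(c) = (id⊗Δ_≻)Δ_≺(c), and (Δ_≻⊗id + Δ_≺⊗id)Δ_≺(c) = (id⊗Δ_≺)Δ_≺(c). -/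
open TensorProduct

noncomputable section

variable {K : Type*} [Field K] {C : Type*} [AddCommGroup C] [Module K C]

/-!
For coassociative `Δ` and linear maps `f, g, h`, the element `f(c₁) ⊗ g(c₂) ⊗ h(c₃)` may be computed
by splitting either tensor factor of `Δ c`. The three dendriform identities are the cases
`(f, g, h) = (id, T, T)`, `(Q, id, T)` and `(Q, Q, id)`. In the first and the last, the Rota-Baxter
identities rewrite `T(c₁) ⊗ T(c₂)` and `Q(c₁) ⊗ Q(c₂)` as `Δ_≻ + Δ_≺` applied to `T c` and `Q c`.
-/

section CommSemiring

variable {R M N P S : Type*} [CommSemiring R] [AddCommMonoid M] [AddCommMonoid N]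
  [AddCommMonoid P] [AddCommMonoid S] [Module R M] [Module R N] [Module R P] [Module R S]

/-- The half-comultiplication `Δ_≻(c) = c₁ ⊗ T(c₂)`, defined for any comultiplication `Δ` on a
module over a commutative semiring. -/
def comulSucc (Δ : M →ₗ[R] M ⊗[R] M) (T : M →ₗ[R] M) : M →ₗ[R] M ⊗[R] M :=
  map .id T ∘ₗ Δ

/-- The half-comultiplication `Δ_≺(c) = Q(c₁) ⊗ c₂`, defined for any comultiplication `Δ` on a
module over a commutative semiring. -/
def comulPrec (Δ : M →ₗ[R] M ⊗[R] M) (Q : M →ₗ[R] M) : M →ₗ[R] M ⊗[R] M :=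
  map Q .id ∘ₗ Δ

variable {Δ : M →ₗ[R] M ⊗[R] M}

theorem assoc_map_map_comp_of_coassoc
    (hΔ : ∀ c, TensorProduct.assoc R M M M (map Δ .id (Δ c)) = map .id Δ (Δ c))
    (f : M →ₗ[R] N) (g : M →ₗ[R] P) (h : M →ₗ[R] S) (c : M) :
    TensorProduct.assoc R N P S (map (map f g ∘ₗ Δ) h (Δ c)) = map f (map g h ∘ₗ Δ) (Δ c) := by
  calc TensorProduct.assoc R N P S (map (map f g ∘ₗ Δ) h (Δ c))
      = TensorProduct.assoc R N P S (map (map f g) h (map Δ .id (Δ c))) := by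
        rw [map_map, LinearMap.comp_id]
    _ = map f (map g h) (TensorProduct.assoc R M M M (map Δ .id (Δ c))) :=
        (map_map_assoc f g h _).symm
    _ = map f (map g h) (map .id Δ (Δ c)) := by rw [hΔ]
    _ = map f (map g h ∘ₗ Δ) (Δ c) := by rw [map_map, LinearMap.comp_id]

variable {Q T : M →ₗ[R] M}

theorem assoc_map_comulSucc_comulSucc
    (hΔ : ∀ c, TensorProduct.assoc R M M M (map Δ .id (Δ c)) = map .id Δ (Δ c))
    (hT : ∀ c, map T T (Δ c) = comulPrec Δ Q (T c) + comulSucc Δ T (T c)) (c : M) :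
    TensorProduct.assoc R M M M (map (comulSucc Δ T) .id (comulSucc Δ T c)) =
      map .id (comulSucc Δ T) (comulSucc Δ T c) + map .id (comulPrec Δ Q) (comulSucc Δ T c) := by
  have hT_comp : map T T ∘ₗ Δ = (comulSucc Δ T + comulPrec Δ Q) ∘ₗ T :=
    LinearMap.ext fun c ↦ (hT c).trans (add_comm _ _)
  calc TensorProduct.assoc R M M M (map (comulSucc Δ T) .id (comulSucc Δ T c))
      = TensorProduct.assoc R M M M (map (map .id T ∘ₗ Δ) T (Δ c)) := by
        simp only [comulSucc, LinearMap.comp_apply, map_map, LinearMap.comp_id, LinearMap.id_comp]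
    _ = map .id (map T T ∘ₗ Δ) (Δ c) := assoc_map_map_comp_of_coassoc hΔ .id T T c
    _ = map .id (comulSucc Δ T + comulPrec Δ Q) (comulSucc Δ T c) := by
        rw [hT_comp, comulSucc, LinearMap.comp_apply, map_map, LinearMap.id_comp]
    _ = _ := by rw [map_add_right, LinearMap.add_apply]

theorem assoc_map_comulPrec_comulSucc
    (hΔ : ∀ c, TensorProduct.assoc R M M M (map Δ .id (Δ c)) = map .id Δ (Δ c)) (c : M) :
    TensorProduct.assoc R M M M (map (comulPrec Δ Q) .id (comulSucc Δ T c)) =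
      map .id (comulSucc Δ T) (comulPrec Δ Q c) := by
  simpa only [comulSucc, comulPrec, LinearMap.comp_apply, map_map, LinearMap.comp_id,
    LinearMap.id_comp] using assoc_map_map_comp_of_coassoc hΔ Q .id T c

theorem assoc_map_comulSucc_add_assoc_map_comulPrec_comulPrec
    (hΔ : ∀ c, TensorProduct.assoc R M M M (map Δ .id (Δ c)) = map .id Δ (Δ c))
    (hQ : ∀ c, map Q Q (Δ c) = comulPrec Δ Q (Q c) + comulSucc Δ T (Q c)) (c : M) :
    TensorProduct.assoc R M M M (map (comulSucc Δ T) .id (comulPrec Δ Q c)) +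
        TensorProduct.assoc R M M M (map (comulPrec Δ Q) .id (comulPrec Δ Q c)) =
      map .id (comulPrec Δ Q) (comulPrec Δ Q c) := by
  have hQ_comp : map Q Q ∘ₗ Δ = (comulSucc Δ T + comulPrec Δ Q) ∘ₗ Q :=
    LinearMap.ext fun c ↦ (hQ c).trans (add_comm _ _)
  calc TensorProduct.assoc R M M M (map (comulSucc Δ T) .id (comulPrec Δ Q c)) +
        TensorProduct.assoc R M M M (map (comulPrec Δ Q) .id (comulPrec Δ Q c))
      = TensorProduct.assoc R M M M
          (map (comulSucc Δ T + comulPrec Δ Q) .id (comulPrec Δ Q c)) := by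
        rw [map_add_left, LinearMap.add_apply, _root_.map_add]
    _ = TensorProduct.assoc R M M M (map (map Q Q ∘ₗ Δ) .id (Δ c)) := by
        rw [hQ_comp, comulPrec, LinearMap.comp_apply, map_map, LinearMap.id_comp]
    _ = map Q (map Q .id ∘ₗ Δ) (Δ c) := assoc_map_map_comp_of_coassoc hΔ Q Q .id c
    _ = map .id (comulPrec Δ Q) (comulPrec Δ Q c) := by
        simp only [comulPrec, LinearMap.comp_apply, map_map, LinearMap.comp_id, LinearMap.id_comp]

theorem dendriform_of_cosystem_general
    (hΔ : ∀ c, TensorProduct.assoc R M M M (map Δ .id (Δ c)) = map .id Δ (Δ c))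
    (hQ : ∀ c, map Q Q (Δ c) = comulPrec Δ Q (Q c) + comulSucc Δ T (Q c))
    (hT : ∀ c, map T T (Δ c) = comulPrec Δ Q (T c) + comulSucc Δ T (T c)) :
    (∀ c, TensorProduct.assoc R M M M (map (comulSucc Δ T) .id (comulSucc Δ T c)) =
      map .id (comulSucc Δ T) (comulSucc Δ T c) + map .id (comulPrec Δ Q) (comulSucc Δ T c)) ∧
    (∀ c, TensorProduct.assoc R M M M (map (comulPrec Δ Q) .id (comulSucc Δ T c)) =
      map .id (comulSucc Δ T) (comulPrec Δ Q c)) ∧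
    (∀ c, TensorProduct.assoc R M M M (map (comulSucc Δ T) .id (comulPrec Δ Q c)) +
        TensorProduct.assoc R M M M (map (comulPrec Δ Q) .id (comulPrec Δ Q c)) =
      map .id (comulPrec Δ Q) (comulPrec Δ Q c)) :=
  ⟨assoc_map_comulSucc_comulSucc hΔ hT, assoc_map_comulPrec_comulSucc hΔ,
    assoc_map_comulSucc_add_assoc_map_comulPrec_comulPrec hΔ hQ⟩

end CommSemiring

/-- Theorem 6.2(1): a Rota-Baxter cosystem induces a dendriform
coalgebra via `Δ_≻(c) = c₁ ⊗ T(c₂)` and `Δ_≺(c) = Q(c₁) ⊗ c₂`. -/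
theorem dendriform_of_cosystem
    (Δ : C →ₗ[K] C ⊗[K] C) (hΔ : Coassoc Δ) (Q T : C →ₗ[K] C)
    (h : IsRBCosystem Δ Q T) :
    IsDendriformCoalgebra (TensorProduct.map LinearMap.id T ∘ₗ Δ)
      (TensorProduct.map Q LinearMap.id ∘ₗ Δ) := by
  exact dendriform_of_cosystem_general hΔ h.1 h.2

end
end

section
/- Let C be a non-degenerate coalgebra over a field K and let Q, T : C → C be linear maps. Define Δ_≻, Δ_≺ : C → C⊗C by Δ_≻(c) = c₁ ⊗ T(c₂) and Δ_≺(c) = Q(c₁) ⊗ c₂. If (C, Δ_≻, Δ_≺) is a dendriform coalgebra, then (C, Q, T) is a Rota-Baxter cosystem. -/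
open TensorProduct

noncomputable section

variable {K : Type*} [Field K] {C : Type*} [AddCommGroup C] [Module K C]

/-!
By coassociativity, `Q(c₁) ⊗ Q(c₂) ⊗ c₃` is `(id ⊗ Δ_≺) Δ_≺`, so with `D = Δ_≻ + Δ_≺` the third
dendriform axiom says that `c ↦ Q(c₁) ⊗ Q(c₂)` and `D ∘ Q` agree after being applied to the first
leg of `Δ`. Non-degeneracy, which extends from maps `C → C` to maps from `C` into any vector space
because vectors are separated by linear maps, then gives the equality itself. The first axiom
yields the condition on `T` in the same way, on the second leg.
-/

theorem eq_zero_of_forall_comp_eq_zero {V : Type*} [AddCommGroup V] [Module K V]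
    {F : C →ₗ[K] V} (hF : ∀ φ : V →ₗ[K] C, φ ∘ₗ F = 0) : F = 0 := by
  ext c
  by_contra hFc
  obtain ⟨φ, -, hφ⟩ := LinearMap.exists_extend_of_notMem
    (0 : (⊥ : Submodule K V) →ₗ[K] C) (mt (Submodule.mem_bot K).mp hFc) c
  have hc : c = 0 := by rw [← hφ, ← LinearMap.comp_apply, hF, LinearMap.zero_apply]
  exact hFc (by rw [hc, map_zero, map_zero])

section

variable {V : Type*} [AddCommGroup V] [Module K V] {Δ : C →ₗ[K] C ⊗[K] C}

theorem Coassoc.assoc_map_map_comp (hΔ : Coassoc Δ) {W X : Type*}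
    [AddCommGroup W] [Module K W] [AddCommGroup X] [Module K X]
    (f : C →ₗ[K] V) (g : C →ₗ[K] W) (h : C →ₗ[K] X) (c : C) :
    TensorProduct.assoc K V W X (TensorProduct.map (TensorProduct.map f g ∘ₗ Δ) h (Δ c)) =
      TensorProduct.map f (TensorProduct.map g h ∘ₗ Δ) (Δ c) := by
  calc TensorProduct.assoc K V W X (TensorProduct.map (TensorProduct.map f g ∘ₗ Δ) h (Δ c))
      = TensorProduct.map f (TensorProduct.map g h)
          (TensorProduct.assoc K C C C (TensorProduct.map Δ LinearMap.id (Δ c))) := by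
        rw [map_map_assoc, map_map, LinearMap.comp_id]
    _ = TensorProduct.map f (TensorProduct.map g h ∘ₗ Δ) (Δ c) := by
        rw [hΔ, map_map, LinearMap.comp_id]

theorem Nondegenerate.eq_of_map_id_left_eq (hnd : Nondegenerate Δ) {F G : C →ₗ[K] V}
    (hFG : ∀ c, TensorProduct.map (LinearMap.id : C →ₗ[K] C) F (Δ c) =
      TensorProduct.map LinearMap.id G (Δ c)) : F = G := by
  refine sub_eq_zero.mp (eq_zero_of_forall_comp_eq_zero fun φ ↦ hnd _ (.inl fun c ↦ ?_))
  have hsub : (F - G).lTensor C (Δ c) = 0 := by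
    rw [LinearMap.lTensor_sub, LinearMap.sub_apply, sub_eq_zero]
    exact hFG c
  change (φ ∘ₗ (F - G)).lTensor C (Δ c) = 0
  rw [LinearMap.lTensor_comp_apply, hsub, map_zero]

theorem Nondegenerate.eq_of_map_id_right_eq (hnd : Nondegenerate Δ) {F G : C →ₗ[K] V}
    (hFG : ∀ c, TensorProduct.map F (LinearMap.id : C →ₗ[K] C) (Δ c) =
      TensorProduct.map G LinearMap.id (Δ c)) : F = G := by
  refine sub_eq_zero.mp (eq_zero_of_forall_comp_eq_zero fun φ ↦ hnd _ (.inr fun c ↦ ?_))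
  have hsub : (F - G).rTensor C (Δ c) = 0 := by
    rw [LinearMap.rTensor_sub, LinearMap.sub_apply, sub_eq_zero]
    exact hFG c
  change (φ ∘ₗ (F - G)).rTensor C (Δ c) = 0
  rw [LinearMap.rTensor_comp_apply, hsub, map_zero]

theorem map_self_comp_eq_comp_of_first_leg (hΔ : Coassoc Δ) (hnd : Nondegenerate Δ)
    {Q : C →ₗ[K] V} {D : V →ₗ[K] V ⊗[K] V}
    (hD : ∀ c, TensorProduct.assoc K V V C
        (TensorProduct.map D LinearMap.id (TensorProduct.map Q LinearMap.id (Δ c))) =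
      TensorProduct.map LinearMap.id (TensorProduct.map Q LinearMap.id ∘ₗ Δ)
        (TensorProduct.map Q LinearMap.id (Δ c))) :
    TensorProduct.map Q Q ∘ₗ Δ = D ∘ₗ Q := by
  refine hnd.eq_of_map_id_right_eq fun c ↦ (TensorProduct.assoc K V V C).injective ?_
  rw [hΔ.assoc_map_map_comp]
  simpa only [map_map, LinearMap.id_comp, LinearMap.comp_id] using (hD c).symm

theorem map_self_comp_eq_comp_of_second_leg (hΔ : Coassoc Δ) (hnd : Nondegenerate Δ)
    {T : C →ₗ[K] V} {D : V →ₗ[K] V ⊗[K] V}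
    (hD : ∀ c, TensorProduct.assoc K C V V
        (TensorProduct.map (TensorProduct.map LinearMap.id T ∘ₗ Δ) LinearMap.id
          (TensorProduct.map LinearMap.id T (Δ c))) =
      TensorProduct.map LinearMap.id D (TensorProduct.map LinearMap.id T (Δ c))) :
    TensorProduct.map T T ∘ₗ Δ = D ∘ₗ T := by
  refine hnd.eq_of_map_id_left_eq fun c ↦ ?_
  rw [← hΔ.assoc_map_map_comp]
  simpa only [map_map, LinearMap.id_comp, LinearMap.comp_id] using hD c

end

/-- Theorem 6.2(2): on a non-degenerate coalgebra, the dendriform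
coalgebra conditions for `Δ_≻(c) = c₁ ⊗ T(c₂)`, `Δ_≺(c) = Q(c₁) ⊗ c₂` imply that
`(C, Q, T)` is a Rota-Baxter cosystem. -/
theorem cosystem_of_dendriform
    (Δ : C →ₗ[K] C ⊗[K] C) (hΔ : Coassoc Δ) (hnd : Nondegenerate Δ)
    (Q T : C →ₗ[K] C)
    (h : IsDendriformCoalgebra (TensorProduct.map LinearMap.id T ∘ₗ Δ)
      (TensorProduct.map Q LinearMap.id ∘ₗ Δ)) :
    IsRBCosystem Δ Q T := by
  obtain ⟨h_first, -, h_third⟩ := h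
  set D := TensorProduct.map Q LinearMap.id ∘ₗ Δ + TensorProduct.map LinearMap.id T ∘ₗ Δ with hD
  have hQ : TensorProduct.map Q Q ∘ₗ Δ = D ∘ₗ Q :=
    map_self_comp_eq_comp_of_first_leg hΔ hnd fun c ↦ by
      rw [hD, map_add_left, LinearMap.add_apply, map_add, add_comm]
      exact h_third c
  have hT : TensorProduct.map T T ∘ₗ Δ = D ∘ₗ T :=
    map_self_comp_eq_comp_of_second_leg hΔ hnd fun c ↦ by
      rw [hD, map_add_right, LinearMap.add_apply, add_comm]
      exact h_first c
  exact ⟨LinearMap.congr_fun hQ, LinearMap.congr_fun hT⟩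

end
end
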